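/- Let G be a finite connected simple graph with at least 3 vertices. Then G is 3-colourable if and only if there exists a surjective homomorphism from the disjoint union of the adjacency relation of G with two copies of K1^ref to the disjoint union K3 ⊎ K1^ref ⊎ K1^ref. -/

import Mathlib

/-- The disjoint union of two binary relations, on the sum type. -/
def SumRel {α β : Type*} (r : α → α → Prop) (s : β → β → Prop) :
    α ⊕ β → α ⊕ β → Prop
  | Sum.inl x, Sum.inl y => r x y
  | Sum.inr x, Sum.inr y => s x y
  | _, _ => False

lemma exists_surj_col {V : Type*} [Fintype V] (G : SimpleGraph V)
    (hcard : 3 ≤ Fintype.card V) (h : G.Colorable 3) :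
    ∃ c : V → Fin 3, Function.Surjective c ∧ ∀ x y, G.Adj x y → c x ≠ c y := by
  classical
  obtain ⟨c0⟩ := h
  let S := {c : V → Fin 3 // ∀ x y, G.Adj x y → c x ≠ c y}
  haveI : Nonempty S := ⟨⟨c0, fun x y hxy => c0.valid hxy⟩⟩
  obtain ⟨⟨c, hc⟩, hmax⟩ := Finite.exists_max (fun c : S => (Finset.univ.image c.1).card)
  refine ⟨c, ?_, hc⟩
  intro k
  by_contra hk
  push Not at hk
  have hninj : ¬ Function.Injective c := by
    intro hi
    have h1 : (Finset.univ.image c).card = Fintype.card V := by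
      rw [Finset.card_image_of_injective _ hi, Finset.card_univ]
    have h2 : (Finset.univ.image c).card < Fintype.card (Fin 3) := by
      rw [← Finset.card_univ]
      apply Finset.card_lt_card
      refine Finset.ssubset_univ_iff.2 ?_
      intro he
      have : k ∈ Finset.univ.image c := by rw [he]; simp
      simp at this
      obtain ⟨a, ha⟩ := this
      exact hk a ha
    simp at h2
    omega
  simp only [Function.Injective] at hninj
  push Not at hninj
  obtain ⟨a, b, hab, hne⟩ := hninj
  have hc' : ∀ x y, G.Adj x y → Function.update c a k x ≠ Function.update c a k y := by
    intro x y hxy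
    have h1 := hc x y hxy
    have h2 := hxy.ne
    have h3 := hk x
    have h4 := hk y
    simp only [Function.update_apply]
    split_ifs <;> simp_all [eq_comm]
  have := hmax ⟨_, hc'⟩
  refine absurd this (not_le.2 ?_)
  apply Finset.card_lt_card
  refine (Finset.ssubset_iff_of_subset ?_).2 ⟨k, ?_, ?_⟩
  · intro j hj
    simp only [Finset.mem_image, Finset.mem_univ, true_and] at hj ⊢
    obtain ⟨x, rfl⟩ := hj
    by_cases hx : x = a
    · exact ⟨b, by rw [Function.update_of_ne hne.symm, hx, hab]⟩
    · exact ⟨x, by rw [Function.update_of_ne hx]⟩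
  · simp only [Finset.mem_image, Finset.mem_univ, true_and]
    exact ⟨a, by simp⟩
  · simp [hk]

/-- A finite connected graph with at least 3 vertices is 3-colourable iff there is a
surjective homomorphism from `G ⊎ K₁^ref ⊎ K₁^ref` to `K₃ ⊎ K₁^ref ⊎ K₁^ref`. -/
theorem colorable_iff_sHom_K3_K1ref_K1ref {V : Type*} [Fintype V] (G : SimpleGraph V)
    (hconn : G.Connected) (hcard : 3 ≤ Fintype.card V) :
    G.Colorable 3 ↔
      (∃ f : (V ⊕ Unit) ⊕ Unit → ((Fin 3) ⊕ Unit) ⊕ Unit, Function.Surjective f ∧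
        ∀ x y, SumRel (SumRel G.Adj (fun _ _ : Unit => True)) (fun _ _ : Unit => True) x y →
          SumRel (SumRel (fun i j : Fin 3 => i ≠ j) (fun _ _ : Unit => True))
            (fun _ _ : Unit => True) (f x) (f y)) := by
  constructor
  · intro h
    obtain ⟨c, hs, hc⟩ := exists_surj_col G hcard h
    refine ⟨Sum.map (Sum.map c id) id,
      Function.Surjective.sumMap (Function.Surjective.sumMap hs Function.surjective_id)
        Function.surjective_id, ?_⟩
    rintro ((x | x) | x) ((y | y) | y) h
    · exact hc x y h
    all_goals first | exact h.elim | trivial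
  · rintro ⟨f, hs, hf⟩
    obtain ⟨v, i, hv⟩ : ∃ v i, f (Sum.inl (Sum.inl v)) = Sum.inl (Sum.inl i) := by
      obtain ⟨((v | u) | u), hx⟩ := hs (Sum.inl (Sum.inl 0))
      · exact ⟨v, 0, hx⟩
      · have := hf (Sum.inl (Sum.inr u)) (Sum.inl (Sum.inr u)) trivial
        rw [hx] at this
        exact absurd rfl this
      · have := hf (Sum.inr u) (Sum.inr u) trivial
        rw [hx] at this
        exact absurd rfl this
    have key : ∀ a b, G.Walk a b → (∃ i, f (Sum.inl (Sum.inl a)) = Sum.inl (Sum.inl i)) →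
        ∃ i, f (Sum.inl (Sum.inl b)) = Sum.inl (Sum.inl i) := by
      intro a b w
      induction w with
      | nil => exact id
      | @cons a b c hab _ ih =>
        rintro ⟨i, hi⟩
        apply ih
        have := hf (Sum.inl (Sum.inl a)) (Sum.inl (Sum.inl b)) hab
        rw [hi] at this
        generalize f (Sum.inl (Sum.inl b)) = z at this
        rcases z with ((j | j) | j)
        · exact ⟨j, rfl⟩
        · exact this.elim
        · exact this.elim
    have all : ∀ w, ∃ i, f (Sum.inl (Sum.inl w)) = Sum.inl (Sum.inl i) := by
      intro w
      obtain ⟨p⟩ := hconn.preconnected v w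
      exact key v w p ⟨i, hv⟩
    choose c hc using all
    refine ⟨SimpleGraph.Coloring.mk c ?_⟩
    intro x y hxy
    have := hf (Sum.inl (Sum.inl x)) (Sum.inl (Sum.inl y)) hxy
    rw [hc, hc] at this
    exact this
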